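/- arXiv:1208.3161 — 2 statements merged into one kernel-verified Lean document; each statement's English description precedes it below -/
import Mathlib

section
/- Let T be a normal rank-one transformation on an infinite σ-finite measure space and let F = I be the unit interval. Then for all sets A and B, each of which is a finite union of levels contained in I, one has (1/a_n(I)) ∑_{k=0}^{n−1} μ(A ∩ T^k B) → μ(A)μ(B) as n → ∞. -/
open MeasureTheory Filter Set Pointwise

/-- A rank-one cutting-and-stacking transformation of a subset `X ⊆ ℝ` (with Lebesgue
measure), given by columns `C n` consisting of `h n` levels (open intervals) of width `w n`,
with `pos n j` the left endpoint of the level of height `j` in column `C n`; column `C (n+1)`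
is obtained from `C n` by cutting into `r n ≥ 2` subcolumns of equal width, adding `s n k`
spacers above the `k`-th subcolumn, and stacking. -/
structure RankOne where
  X : Set ℝ
  T : ℝ ≃ᵐ ℝ
  r : ℕ → ℕ
  s : ℕ → ℕ → ℕ
  h : ℕ → ℕ
  w : ℕ → ℝ
  pos : ℕ → ℕ → ℝ
  hr : ∀ n, 2 ≤ r n
  h0 : h 0 = 1
  w0 : w 0 = 1
  pos0 : pos 0 0 = 0
  hrec : ∀ n, h (n + 1) = ∑ k ∈ Finset.range (r n), (h n + s n k)
  wrec : ∀ n, w (n + 1) = w n / (r n : ℝ)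
  hX : X = ⋃ n, ⋃ j < h n, Set.Ioo (pos n j) (pos n j + w n)
  disj : ∀ n, ∀ j < h n, ∀ j' < h n, j ≠ j' →
    Disjoint (Set.Ioo (pos n j) (pos n j + w n)) (Set.Ioo (pos n j') (pos n j' + w n))
  stack : ∀ n, ∀ j < h n, ∀ k < r n,
    pos (n + 1) ((∑ i ∈ Finset.range k, (h n + s n i)) + j) = pos n j + (k : ℝ) * w (n + 1)
  Tmap : ∀ n j, j + 1 < h n → ∀ x ∈ Set.Ioo (pos n j) (pos n j + w n),
    T x = x + (pos n (j + 1) - pos n j)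
  Tbij : Set.BijOn (⇑T) X X
  Tpres : MeasurePreserving (⇑T) (volume.restrict X) (volume.restrict X)

namespace RankOne

/-- The level of height `j` in column `C n`. -/
def lvl (S : RankOne) (n j : ℕ) : Set ℝ := Set.Ioo (S.pos n j) (S.pos n j + S.w n)

/-- The measure on the space: Lebesgue measure restricted to `X`. -/
noncomputable def μ (S : RankOne) : Measure ℝ := volume.restrict S.X

/-- The intrinsic weight sequence `u n F = μ(F ∩ TⁿF) / μ(F)²`. -/
noncomputable def u (S : RankOne) (F : Set ℝ) (n : ℕ) : ℝ :=
  (S.μ (F ∩ (⇑S.T)^[n] '' F)).toReal / (S.μ F).toReal ^ 2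

/-- `a n F = ∑_{k<n} u k F`. -/
noncomputable def a (S : RankOne) (F : Set ℝ) (n : ℕ) : ℝ :=
  ∑ k ∈ Finset.range n, S.u F k

/-- `T` is normal if spacers are added above the rightmost subcolumn infinitely often. -/
def Normal (S : RankOne) : Prop := ∀ m, ∃ n, m ≤ n ∧ 0 < S.s n (S.r n - 1)

/-- `T` grows exponentially: `2 s_{n, r_n - 1} ≥ h_{n+1}` for every `n`. -/
def ExpGrowing (S : RankOne) : Prop := ∀ n, S.h (n + 1) ≤ 2 * S.s n (S.r n - 1)

/-- `T` has a bounded number of cuts: `sup r_n < ∞`. -/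
def BoundedCuts (S : RankOne) : Prop := ∃ c, ∀ n, S.r n ≤ c

/-- `H n = {0} ∪ {∑_{k≤i} (h n + s n k) : 0 ≤ i < r n - 1}`. -/
def Hset (S : RankOne) (n : ℕ) : Finset ℕ :=
  insert 0 ((Finset.range (S.r n - 1)).image fun i => ∑ k ∈ Finset.range (i + 1), (S.h n + S.s n k))

/-- The set of heights in column `C N` of the descendants of the level of height `p`
in column `C j`: `D(J, N) = p + H j ⊕ H (j+1) ⊕ ⋯ ⊕ H (N-1)`. -/
def desc (S : RankOne) (j p : ℕ) : ℕ → Finset ℕ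
  | 0 => {p}
  | N + 1 => if N < j then {p} else desc S j p N + S.Hset N

/-- `M m`: the maximal height of a descendant of the unit interval `I` in column `C m`. -/
def M (S : RankOne) (m : ℕ) : ℕ := (S.desc 0 0 m).sup id

/-- The ergodic sum `S_n(1_F)(x) = ∑_{k<n} 1_F(T^k x)`. -/
noncomputable def birkhoff (S : RankOne) (F : Set ℝ) (n : ℕ) (x : ℝ) : ℝ :=
  ∑ k ∈ Finset.range n, Set.indicator F (fun _ => (1 : ℝ)) ((⇑S.T)^[k] x)

/-- `T` is rationally weakly mixing on `F`. -/
def RWMOn (S : RankOne) (F : Set ℝ) : Prop :=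
  MeasurableSet F ∧ 0 < S.μ F ∧ S.μ F ≠ ⊤ ∧
  ∀ A B : Set ℝ, MeasurableSet A → A ⊆ F → MeasurableSet B → B ⊆ F →
    Tendsto (fun n => (S.a F n)⁻¹ *
      ∑ k ∈ Finset.range n,
        |(S.μ (A ∩ (⇑S.T)^[k] '' B)).toReal - (S.μ A).toReal * (S.μ B).toReal * S.u F k|)
      atTop (nhds 0)

/-- `T` is rationally weakly mixing. -/
def RWM (S : RankOne) : Prop := ∃ F, S.RWMOn F

/-- `T` is rationally ergodic: some set `F` of positive finite measure satisfies a
Renyi inequality. -/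
def RatErgodic (S : RankOne) : Prop :=
  ∃ (F : Set ℝ) (c : ℝ), MeasurableSet F ∧ 0 < S.μ F ∧ S.μ F ≠ ⊤ ∧
    ∀ n, ∫ x in F, (S.birkhoff F n x) ^ 2 ∂S.μ ≤ c * (∫ x in F, S.birkhoff F n x ∂S.μ) ^ 2

/-- `T` is spectrally weakly mixing: every bounded measurable eigenfunction is a.e. constant. -/
def SpecWM (S : RankOne) : Prop :=
  ∀ (f : ℝ → ℂ) (z : ℂ), Measurable f → (∃ C, ∀ᵐ x ∂S.μ, ‖f x‖ ≤ C) →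
    (∀ᵐ x ∂S.μ, f (S.T x) = z * f x) → ∃ c : ℂ, ∀ᵐ x ∂S.μ, f x = c

/-- `T` is zero-type: `μ(A ∩ TⁿA) → 0` for all `A` of finite measure. -/
def ZeroType (S : RankOne) : Prop :=
  ∀ A : Set ℝ, MeasurableSet A → S.μ A ≠ ⊤ →
    Tendsto (fun n => S.μ (A ∩ (⇑S.T)^[n] '' A)) atTop (nhds 0)

/-- The `i`-th nonzero element of `H n` (for `i < r n - 1`): `e n i = ∑_{k ≤ i} (h n + s n k)`. -/
def e (S : RankOne) (n i : ℕ) : ℕ := ∑ k ∈ Finset.range (i + 1), (S.h n + S.s n k)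

/-- `T` is steep: listing the nonzero elements of `H 0`, then `H 1`, etc., as `t 1, t 2, …`,
each successive element is at least `4` times the previous one. -/
def Steep (S : RankOne) : Prop :=
  (∀ n i, i + 2 < S.r n → 4 * S.e n i ≤ S.e n (i + 1)) ∧
  (∀ n, 4 * S.e n (S.r n - 2) ≤ S.e (n + 1) 0)

/-- `T` is almost steep. -/
def AlmostSteep (S : RankOne) : Prop :=
  ∀ n, 3 ≤ S.r n ∧ S.s n 0 = 0 ∧ S.s n 1 = 1 ∧
    ∀ i, 2 ≤ i → i ≤ S.r n - 1 →
      4 * (∑ k ∈ Finset.range i, (S.h n + S.s n k)) ≤ ∑ k ∈ Finset.range (i + 1), (S.h n + S.s n k)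

/-- `A` is a finite union of levels of `T`. -/
def FinUnionLevels (S : RankOne) (A : Set ℝ) : Prop :=
  ∃ q : Finset (ℕ × ℕ), (∀ v ∈ q, v.2 < S.h v.1) ∧ A = ⋃ v ∈ q, S.lvl v.1 v.2

end RankOne


namespace RankOne

lemma w_pos' (S : RankOne) (n : ℕ) : 0 < S.w n := by
  induction n with
  | zero => rw [S.w0]; norm_num
  | succ n ih =>
    rw [S.wrec]
    have := S.hr n
    have : (0 : ℝ) < S.r n := by exact_mod_cast (by omega)
    positivity

lemma w_le' (S : RankOne) (n : ℕ) : S.w n ≤ (1 / 2) ^ n := by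
  induction n with
  | zero => rw [S.w0]; norm_num
  | succ n ih =>
    rw [S.wrec, pow_succ]
    have h2 : (2 : ℝ) ≤ S.r n := by exact_mod_cast S.hr n
    rw [div_le_iff₀ (by linarith)]
    have : (0 : ℝ) ≤ (1 / 2) ^ n := by positivity
    nlinarith

lemma h_pos' (S : RankOne) (n : ℕ) : 0 < S.h n := by
  induction n with
  | zero => rw [S.h0]; norm_num
  | succ n ih =>
    rw [S.hrec]
    have := S.hr n
    apply Finset.sum_pos
    · intro i _; omega
    · exact ⟨0, by simp; omega⟩

lemma lvl_subset' (S : RankOne) {n j : ℕ} (hj : j < S.h n) : S.lvl n j ⊆ S.X := by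
  rw [S.hX]
  intro x hx
  simp only [Set.mem_iUnion]
  exact ⟨n, j, hj, hx⟩

lemma lvl_meas' (S : RankOne) (n j : ℕ) : MeasurableSet (S.lvl n j) := measurableSet_Ioo

lemma mu_lvl' (S : RankOne) {n j : ℕ} (hj : j < S.h n) : S.μ (S.lvl n j) = ENNReal.ofReal (S.w n) := by
  rw [RankOne.μ, Measure.restrict_apply (S.lvl_meas' n j),
    Set.inter_eq_left.2 (S.lvl_subset' hj), RankOne.lvl, Real.volume_Ioo]
  congr 1; ring

lemma T_lvl' (S : RankOne) {n j : ℕ} (hj : j + 1 < S.h n) :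
    (⇑S.T) '' S.lvl n j = S.lvl n (j + 1) := by
  have : (⇑S.T) '' S.lvl n j = (fun x => x + (S.pos n (j + 1) - S.pos n j)) '' S.lvl n j :=
    Set.image_congr (fun x hx => S.Tmap n j hj x hx)
  rw [this, RankOne.lvl, RankOne.lvl, Set.image_add_const_Ioo]
  congr 1 <;> ring

lemma Titer_lvl' (S : RankOne) {n j : ℕ} (hj : j < S.h n) :
    (⇑S.T)^[j] '' S.lvl n 0 = S.lvl n j := by
  induction j with
  | zero => simp
  | succ j ih =>
    rw [Function.iterate_succ', Set.image_comp, ih (by omega), S.T_lvl' hj]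

lemma Timage_meas' (S : RankOne) (k : ℕ) {E : Set ℝ} (hE : MeasurableSet E) :
    MeasurableSet ((⇑S.T)^[k] '' E) := by
  induction k with
  | zero => simpa
  | succ k ih =>
    rw [Function.iterate_succ', Set.image_comp]
    exact (MeasurableEquiv.measurableSet_image _).2 ih

lemma mu_image' (S : RankOne) (E : Set ℝ) : S.μ ((⇑S.T) '' E) = S.μ E := by
  have h := S.Tpres.measure_preimage_equiv ((⇑S.T) '' E)
  rw [Set.preimage_image_eq _ S.T.injective] at h
  exact h.symm

lemma mu_imageIter' (S : RankOne) (k : ℕ) (E : Set ℝ) : S.μ ((⇑S.T)^[k] '' E) = S.μ E := by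
  induction k with
  | zero => simp
  | succ k ih => rw [Function.iterate_succ', Set.image_comp, S.mu_image', ih]

lemma ae_image' (S : RankOne) (k : ℕ) {E F : Set ℝ} (h : E =ᵐ[S.μ] F) :
    ((⇑S.T)^[k] '' E : Set ℝ) =ᵐ[S.μ] ((⇑S.T)^[k] '' F : Set ℝ) := by
  rw [ae_eq_set] at h ⊢
  have inj := S.T.injective.iterate k
  rw [← Set.image_sdiff inj, ← Set.image_sdiff inj, S.mu_imageIter', S.mu_imageIter']
  exact h

/-- `A` is, up to a null set, the union of the levels of column `N` with heights in `P`. -/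
def Rep' (S : RankOne) (N : ℕ) (A : Set ℝ) (P : Finset ℕ) : Prop :=
  (∀ p ∈ P, p < S.h N) ∧ A =ᵐ[S.μ] (⋃ p ∈ P, S.lvl N p : Set ℝ)

lemma Rep'.union {S : RankOne} {N : ℕ} {A B : Set ℝ} {P Q : Finset ℕ} (hA : S.Rep' N A P)
    (hB : S.Rep' N B Q) : S.Rep' N (A ∪ B) (P ∪ Q) := by
  refine ⟨fun p hp => ?_, ?_⟩
  · rcases Finset.mem_union.1 hp with h | h
    · exact hA.1 p h
    · exact hB.1 p h
  · rw [Finset.set_biUnion_union]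
    exact hA.2.union hB.2

lemma exists_rep_biUnion' (S : RankOne) (N : ℕ) {ι : Type*} (q : Finset ι) (f : ι → Set ℝ)
    (h : ∀ v ∈ q, ∃ P, S.Rep' N (f v) P) : ∃ P, S.Rep' N (⋃ v ∈ q, f v) P := by
  classical
  induction q using Finset.induction_on with
  | empty => exact ⟨∅, by simp, by simp⟩
  | insert a q ha ih =>
    obtain ⟨P, hP⟩ := h a (Finset.mem_insert_self _ _)
    obtain ⟨Q, hQ⟩ := ih (fun v hv => h v (Finset.mem_insert_of_mem hv))
    exact ⟨P ∪ Q, by rw [Finset.set_biUnion_insert]; exact hP.union hQ⟩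

lemma stack_lt' (S : RankOne) {n j k : ℕ} (hj : j < S.h n) (hk : k < S.r n) :
    (∑ i ∈ Finset.range k, (S.h n + S.s n i)) + j < S.h (n + 1) := by
  rw [S.hrec]
  have : ∑ i ∈ Finset.range (k + 1), (S.h n + S.s n i) ≤
      ∑ i ∈ Finset.range (S.r n), (S.h n + S.s n i) :=
    Finset.sum_le_sum_of_subset (Finset.range_mono hk)
  rw [Finset.sum_range_succ] at this
  omega

lemma rep_succ' (S : RankOne) {n j : ℕ} (hj : j < S.h n) :
    ∃ P, S.Rep' (n + 1) (S.lvl n j) P := by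
  classical
  refine ⟨(Finset.range (S.r n)).image
    (fun k => (∑ i ∈ Finset.range k, (S.h n + S.s n i)) + j), ?_, ?_⟩
  · intro p hp
    obtain ⟨k, hk, rfl⟩ := Finset.mem_image.1 hp
    exact S.stack_lt' hj (Finset.mem_range.1 hk)
  · have hw := S.w_pos' (n + 1)
    have hrr := S.hr n
    have hwr : S.w n = S.r n * S.w (n + 1) := by
      rw [S.wrec]
      have : (S.r n : ℝ) ≠ 0 := by exact_mod_cast (by omega)
      field_simp
    have hlv : ∀ k < S.r n, S.lvl (n + 1) ((∑ i ∈ Finset.range k, (S.h n + S.s n i)) + j)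
        = Set.Ioo (S.pos n j + k * S.w (n + 1)) (S.pos n j + k * S.w (n + 1) + S.w (n + 1)) := by
      intro k hk
      rw [RankOne.lvl, S.stack n j hj k hk]
    rw [ae_eq_set]
    constructor
    · apply measure_mono_null (t := ((Finset.range (S.r n)).image
        (fun k : ℕ => S.pos n j + k * S.w (n + 1)) : Finset ℝ))
      · rintro x ⟨hx, hx'⟩
        simp only [Finset.mem_image, Set.mem_iUnion, not_exists] at hx'
        simp only [Finset.coe_image, Set.mem_image, Finset.mem_coe, Finset.mem_range]
        have hx1 : S.pos n j < x := hx.1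
        have hx2 : x < S.pos n j + S.w n := hx.2
        have hnn : 0 ≤ (x - S.pos n j) / S.w (n + 1) := div_nonneg (by linarith) hw.le
        set k := ⌊(x - S.pos n j) / S.w (n + 1)⌋₊ with hk
        have k1 := Nat.floor_le hnn
        have k2 := Nat.lt_floor_add_one ((x - S.pos n j) / S.w (n + 1))
        rw [← hk] at k1 k2
        rw [le_div_iff₀ hw] at k1
        rw [div_lt_iff₀ hw] at k2
        have hkr : k < S.r n := by
          have : (k : ℝ) * S.w (n + 1) < S.r n * S.w (n + 1) := by linarith
          exact_mod_cast lt_of_mul_lt_mul_right this hw.le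
        refine ⟨k, hkr, ?_⟩
        by_contra hne
        refine hx' _ ⟨k, Finset.mem_range.2 hkr, rfl⟩ ?_
        rw [hlv k hkr]
        refine ⟨lt_of_le_of_ne (by linarith) hne, by linarith⟩
      · rw [RankOne.μ]
        exact Measure.absolutelyContinuous_of_le Measure.restrict_le_self
          (Finset.measure_zero _ _)
    · have : (⋃ p ∈ (Finset.range (S.r n)).image
        (fun k => (∑ i ∈ Finset.range k, (S.h n + S.s n i)) + j), S.lvl (n + 1) p) \ S.lvl n j
          = ∅ := by
        rw [Set.sdiff_eq_empty]
        intro x hx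
        simp only [Set.mem_iUnion] at hx
        obtain ⟨p, hp, hx⟩ := hx
        obtain ⟨k, hk, rfl⟩ := Finset.mem_image.1 hp
        have hk' := Finset.mem_range.1 hk
        rw [hlv k hk'] at hx
        have h1 : (k : ℝ) + 1 ≤ S.r n := by exact_mod_cast hk'
        have h2 : (0 : ℝ) ≤ k * S.w (n + 1) := by positivity
        have h3 : ((k : ℝ) + 1) * S.w (n + 1) ≤ S.r n * S.w (n + 1) :=
          mul_le_mul_of_nonneg_right h1 hw.le
        refine ⟨by linarith [hx.1], ?_⟩
        linarith [hx.2]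
      rw [this]; simp

lemma rep_le' (S : RankOne) {n N j : ℕ} (hn : n ≤ N) (hj : j < S.h n) :
    ∃ P, S.Rep' N (S.lvl n j) P := by
  induction N, hn using Nat.le_induction with
  | base => exact ⟨{j}, by simpa using hj, by simp; rfl⟩
  | succ N hN ih =>
    obtain ⟨P, hP⟩ := ih
    obtain ⟨Q, hQ⟩ := S.exists_rep_biUnion' (N + 1) P (fun p => S.lvl N p)
      (fun p hp => S.rep_succ' (hP.1 p hp))
    exact ⟨Q, hQ.1, hP.2.trans hQ.2⟩

/-- The correlation `μ(A ∩ T^k B)`. -/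
noncomputable def cor' (S : RankOne) (A B : Set ℝ) (k : ℕ) : ℝ :=
  (S.μ (A ∩ (⇑S.T)^[k] '' B)).toReal

lemma rep_measure' (S : RankOne) {N : ℕ} {A : Set ℝ} {P : Finset ℕ} (hA : S.Rep' N A P) :
    (S.μ A).toReal = P.card * S.w N := by
  rw [measure_congr hA.2, measure_biUnion_finset]
  · rw [Finset.sum_congr rfl (fun p hp => S.mu_lvl' (hA.1 p hp))]
    simp [ENNReal.toReal_mul, (S.w_pos' N).le]
  · intro p hp q hq hpq
    exact S.disj N p (hA.1 p hp) q (hA.1 q hq) hpq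
  · intro p _; exact S.lvl_meas' N p

lemma rep_cor' (S : RankOne) {N : ℕ} {A B : Set ℝ} {P Q : Finset ℕ} (hA : S.Rep' N A P)
    (hB : S.Rep' N B Q) (k : ℕ) :
    S.cor' A B k = ∑ p ∈ P, ∑ q ∈ Q, S.cor' (S.lvl N p) (S.lvl N q) k := by
  have h1 : (A ∩ (⇑S.T)^[k] '' B : Set ℝ) =ᵐ[S.μ]
      (⋃ x ∈ P ×ˢ Q, (S.lvl N x.1 ∩ (⇑S.T)^[k] '' S.lvl N x.2) : Set ℝ) := by
    suffices hset : ((⋃ p ∈ P, S.lvl N p) ∩ (⇑S.T)^[k] '' (⋃ q ∈ Q, S.lvl N q) : Set ℝ) =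
        (⋃ x ∈ P ×ˢ Q, (S.lvl N x.1 ∩ (⇑S.T)^[k] '' S.lvl N x.2) : Set ℝ) by
      rw [← hset]
      exact hA.2.inter (S.ae_image' k hB.2)
    ext y
    simp only [Set.mem_inter_iff, Set.mem_iUnion, Set.mem_image, Finset.mem_product]
    constructor
    · rintro ⟨⟨p, hp, hy⟩, z, ⟨q, hq, hz⟩, rfl⟩
      exact ⟨(p, q), ⟨hp, hq⟩, hy, z, hz, rfl⟩
    · rintro ⟨⟨p, q⟩, ⟨hp, hq⟩, hy, z, hz, rfl⟩
      exact ⟨⟨p, hp, hy⟩, z, ⟨q, hq, hz⟩, rfl⟩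
  rw [cor', measure_congr h1, measure_biUnion_finset, ENNReal.toReal_sum, Finset.sum_product]
  · rfl
  · rintro ⟨p, q⟩ hx
    have hx' := Finset.mem_product.1 hx
    refine ne_top_of_le_ne_top ?_ (measure_mono Set.inter_subset_left)
    rw [S.mu_lvl' (hA.1 p hx'.1)]
    exact ENNReal.ofReal_ne_top
  · rintro ⟨p, q⟩ hx ⟨p', q'⟩ hx' hne
    have hx := Finset.mem_product.1 (Finset.mem_coe.1 hx)
    have hx' := Finset.mem_product.1 (Finset.mem_coe.1 hx')
    by_cases hp : p = p'
    · have hq : q ≠ q' := fun h => hne (by rw [hp, h])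
      have hd := S.disj N q (hB.1 q hx.2) q' (hB.1 q' hx'.2) hq
      have := (Set.disjoint_image_iff (S.T.injective.iterate k)).2 hd
      exact this.mono Set.inter_subset_right Set.inter_subset_right
    · have hd := S.disj N p (hA.1 p hx.1) p' (hA.1 p' hx'.1) hp
      exact hd.mono Set.inter_subset_left Set.inter_subset_left
  · rintro ⟨p, q⟩ _
    exact (S.lvl_meas' N p).inter (S.Timage_meas' k (S.lvl_meas' N q))

lemma cor_nonneg' (S : RankOne) (A B : Set ℝ) (k : ℕ) : 0 ≤ S.cor' A B k :=
  ENNReal.toReal_nonneg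

lemma cor_le' (S : RankOne) {N p : ℕ} (hp : p < S.h N) (B : Set ℝ) (k : ℕ) :
    S.cor' (S.lvl N p) B k ≤ S.w N := by
  have h : S.μ (S.lvl N p ∩ (⇑S.T)^[k] '' B) ≤ ENNReal.ofReal (S.w N) := by
    rw [← S.mu_lvl' hp]; exact measure_mono Set.inter_subset_left
  exact ENNReal.toReal_le_of_le_ofReal (S.w_pos' N).le h

lemma cor_shift' (S : RankOne) {N p q : ℕ} (hp : p < S.h N) (hq : q < S.h N) (k : ℕ) :
    S.cor' (S.lvl N p) (S.lvl N q) (k + p) = S.cor' (S.lvl N 0) (S.lvl N 0) (k + q) := by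
  unfold cor'
  rw [← S.Titer_lvl' hp, ← S.Titer_lvl' hq, ← Set.image_comp, ← Function.iterate_add,
    show k + p + q = p + (k + q) by ring, Function.iterate_add _ p, Set.image_comp,
    ← Set.image_inter (S.T.injective.iterate p), S.mu_imageIter']

lemma cor_diag' (S : RankOne) {N p q : ℕ} (hp : p < S.h N) (hqp : q ≤ p) :
    S.cor' (S.lvl N p) (S.lvl N q) (p - q) = S.w N := by
  unfold cor'
  rw [← S.Titer_lvl' hp, ← S.Titer_lvl' (lt_of_le_of_lt hqp hp), ← Set.image_comp,
    ← Function.iterate_add, Nat.sub_add_cancel hqp, Set.inter_self, S.mu_imageIter',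
    S.mu_lvl' (S.h_pos' N), ENNReal.toReal_ofReal (S.w_pos' N).le]

lemma sum_shift' {F : ℕ → ℝ} {W : ℝ} (h0 : ∀ k, 0 ≤ F k) (h1 : ∀ k, F k ≤ W) (p n : ℕ) :
    |∑ k ∈ Finset.range n, F (k + p) - ∑ k ∈ Finset.range n, F k| ≤ p * W := by
  have e1 := Finset.sum_range_add F n p
  have e2 := Finset.sum_range_add F p n
  rw [add_comm p n] at e2
  have e3 : ∑ k ∈ Finset.range n, F (k + p) = ∑ k ∈ Finset.range n, F (p + k) :=
    Finset.sum_congr rfl (fun k _ => by rw [add_comm])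
  have a1 : 0 ≤ ∑ k ∈ Finset.range p, F k := Finset.sum_nonneg (fun k _ => h0 k)
  have a2 : 0 ≤ ∑ k ∈ Finset.range p, F (n + k) := Finset.sum_nonneg (fun k _ => h0 _)
  have a3 : ∑ k ∈ Finset.range p, F k ≤ p * W := by
    simpa using Finset.sum_le_card_nsmul (Finset.range p) F W (fun k _ => h1 k)
  have a4 : ∑ k ∈ Finset.range p, F (n + k) ≤ p * W := by
    simpa using Finset.sum_le_card_nsmul (Finset.range p) (fun k => F (n + k)) W
      (fun k _ => h1 _)
  rw [abs_le]
  constructor <;> linarith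

/-- The partial sums of the correlations. -/
noncomputable def sig' (S : RankOne) (A B : Set ℝ) (n : ℕ) : ℝ :=
  ∑ k ∈ Finset.range n, S.cor' A B k

lemma sig_diff' (S : RankOne) {N p q : ℕ} (hp : p < S.h N) (hq : q < S.h N) (n : ℕ) :
    |S.sig' (S.lvl N p) (S.lvl N q) n - S.sig' (S.lvl N 0) (S.lvl N 0) n| ≤
      (p + q) * S.w N := by
  have b1 := sum_shift' (S.cor_nonneg' (S.lvl N p) (S.lvl N q)) (S.cor_le' hp (S.lvl N q)) p n
  have b2 := sum_shift' (S.cor_nonneg' (S.lvl N 0) (S.lvl N 0))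
    (S.cor_le' (S.h_pos' N) (S.lvl N 0)) q n
  rw [Finset.sum_congr rfl (fun k _ => S.cor_shift' hp hq k)] at b1
  unfold sig'
  rw [abs_le] at *
  constructor <;> linarith [b1.1, b1.2, b2.1, b2.2]

lemma sig_mono' (S : RankOne) (A B : Set ℝ) : Monotone (S.sig' A B) := by
  apply monotone_nat_of_le_succ
  intro n
  unfold sig'
  rw [Finset.sum_range_succ]
  linarith [S.cor_nonneg' A B n]

lemma pairs_card' (P : Finset ℕ) (W : ℝ) :
    (P.card : ℝ) ^ 2 * W ≤ 2 * ∑ p ∈ P, ∑ q ∈ P, (if q ≤ p then W else 0) ∨ W < 0 := by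
  by_cases hW : W < 0
  · exact Or.inr hW
  left
  push Not at hW
  have h1 : ∑ p ∈ P, ∑ q ∈ P, (if q ≤ p then W else 0) =
      ∑ p ∈ P, ∑ q ∈ P, (if p ≤ q then W else 0) := Finset.sum_comm
  have h2 : ∑ p ∈ P, ∑ q ∈ P, W ≤
      ∑ p ∈ P, ∑ q ∈ P, ((if q ≤ p then W else 0) + (if p ≤ q then W else 0)) := by
    refine Finset.sum_le_sum (fun p _ => Finset.sum_le_sum (fun q _ => ?_))
    split_ifs <;> linarith
  simp only [Finset.sum_add_distrib] at h2
  rw [← h1] at h2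
  simp only [Finset.sum_const, nsmul_eq_mul] at h2
  nlinarith

lemma sig_lower' (S : RankOne) {N M : ℕ} (hNM : N ≤ M) :
    S.w N ^ 2 / (2 * S.w M) ≤ S.sig' (S.lvl N 0) (S.lvl N 0) (S.h M) := by
  obtain ⟨P, hP⟩ := S.rep_le' hNM (S.h_pos' N)
  have hwM := S.w_pos' M
  have hm := S.rep_measure' hP
  rw [S.mu_lvl' (S.h_pos' N), ENNReal.toReal_ofReal (S.w_pos' N).le] at hm
  have h1 : ∑ p ∈ P, ∑ q ∈ P, (if q ≤ p then S.w M else 0) ≤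
      S.sig' (S.lvl N 0) (S.lvl N 0) (S.h M) := by
    have he : S.sig' (S.lvl N 0) (S.lvl N 0) (S.h M) = ∑ p ∈ P, ∑ q ∈ P,
        ∑ k ∈ Finset.range (S.h M), S.cor' (S.lvl M p) (S.lvl M q) k := by
      unfold sig'
      rw [Finset.sum_congr rfl (fun k _ => S.rep_cor' hP hP k), Finset.sum_comm]
      exact Finset.sum_congr rfl (fun p _ => Finset.sum_comm)
    rw [he]
    refine Finset.sum_le_sum (fun p hp => ?_)
    refine Finset.sum_le_sum (fun q hq => ?_)
    have hp' := hP.1 p hp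
    split_ifs with hqp
    · rw [← S.cor_diag' hp' hqp]
      exact Finset.single_le_sum (f := fun k => S.cor' (S.lvl M p) (S.lvl M q) k)
        (s := Finset.range (S.h M)) (a := p - q)
        (fun k _ => S.cor_nonneg' _ _ k) (Finset.mem_range.2 (by omega))
    · exact Finset.sum_nonneg (fun k _ => S.cor_nonneg' _ _ k)
  rcases pairs_card' P (S.w M) with h2 | h2
  · rw [div_le_iff₀ (by positivity), hm]
    nlinarith
  · linarith

lemma sig_tendsto' (S : RankOne) (N : ℕ) :
    Tendsto (S.sig' (S.lvl N 0) (S.lvl N 0)) atTop atTop := by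
  apply tendsto_atTop_atTop_of_monotone (S.sig_mono' _ _)
  intro b
  have hw := S.w_pos' N
  have hlim : Tendsto (fun n : ℕ => S.w N ^ 2 / 2 * (2 : ℝ) ^ n) atTop atTop :=
    (tendsto_pow_atTop_atTop_of_one_lt (by norm_num)).const_mul_atTop (by positivity)
  obtain ⟨M, hM1, hM2⟩ := ((hlim.eventually_ge_atTop b).and (eventually_ge_atTop N)).exists
  refine ⟨S.h M, hM1.trans (le_trans ?_ (S.sig_lower' hM2))⟩
  have hwM := S.w_pos' M
  rw [le_div_iff₀ (by positivity)]
  have h2 : (2 : ℝ) ^ M * S.w M ≤ 1 := by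
    have := mul_le_mul_of_nonneg_left (S.w_le' M) (by positivity : (0 : ℝ) ≤ 2 ^ M)
    rw [← mul_pow] at this
    simpa using this
  have : S.w N ^ 2 / 2 * 2 ^ M * (2 * S.w M) = S.w N ^ 2 * (2 ^ M * S.w M) := by ring
  rw [this]
  nlinarith [sq_nonneg (S.w N)]

lemma sig_ratio' (S : RankOne) {N : ℕ} {A B : Set ℝ} {P Q : Finset ℕ} (hA : S.Rep' N A P)
    (hB : S.Rep' N B Q) :
    Tendsto (fun n => S.sig' A B n / S.sig' (S.lvl N 0) (S.lvl N 0) n) atTop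
      (nhds (P.card * Q.card)) := by
  have hσ := S.sig_tendsto' N
  have key : ∀ p ∈ P, ∀ q ∈ Q, Tendsto (fun n => S.sig' (S.lvl N p) (S.lvl N q) n /
      S.sig' (S.lvl N 0) (S.lvl N 0) n) atTop (nhds 1) := by
    intro p hp q hq
    have hz : Tendsto (fun n => (S.sig' (S.lvl N p) (S.lvl N q) n -
        S.sig' (S.lvl N 0) (S.lvl N 0) n) / S.sig' (S.lvl N 0) (S.lvl N 0) n) atTop (nhds 0) := by
      have hb : Tendsto (fun n => (((p : ℝ) + q) * S.w N) / S.sig' (S.lvl N 0) (S.lvl N 0) n)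
          atTop (nhds 0) := hσ.const_div_atTop _
      refine squeeze_zero_norm' ?_ hb
      filter_upwards [hσ.eventually_gt_atTop 0] with n hn
      rw [Real.norm_eq_abs, abs_div, abs_of_pos hn]
      exact div_le_div_of_nonneg_right (S.sig_diff' (hA.1 p hp) (hB.1 q hq) n) hn.le
    have h1 := hz.add_const 1
    rw [zero_add] at h1
    refine h1.congr' ?_
    filter_upwards [hσ.eventually_gt_atTop 0] with n hn
    field_simp
    ring
  have hsum := tendsto_finsetSum P (fun p hp => tendsto_finsetSum Q (fun q hq => key p hp q hq))
  simp only [Finset.sum_const, nsmul_eq_mul, mul_one] at hsum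
  refine hsum.congr (fun n => ?_)
  have : S.sig' A B n = ∑ p ∈ P, ∑ q ∈ Q, S.sig' (S.lvl N p) (S.lvl N q) n := by
    unfold sig'
    rw [Finset.sum_congr rfl (fun k _ => S.rep_cor' hA hB k), Finset.sum_comm]
    exact Finset.sum_congr rfl (fun p _ => Finset.sum_comm)
  rw [this, Finset.sum_div]
  exact Finset.sum_congr rfl (fun p _ => (Finset.sum_div _ _ _).symm)

lemma exists_rep' (S : RankOne) {A : Set ℝ} (hA : S.FinUnionLevels A) :
    ∃ N₀, ∀ N, N₀ ≤ N → ∃ P, S.Rep' N A P := by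
  obtain ⟨q, hq, rfl⟩ := hA
  refine ⟨q.sup Prod.fst, fun N hN => S.exists_rep_biUnion' N q (fun v => S.lvl v.1 v.2) ?_⟩
  intro v hv
  exact S.rep_le' ((Finset.le_sup (f := Prod.fst) hv).trans hN) (hq v hv)

end RankOne

/-- A normal rank-one transformation on an infinite measure space satisfies
`(1/a_n(I)) ∑_{k<n} μ(A ∩ T^k B) → μ(A)μ(B)` for all `A`, `B` finite unions of levels
contained in the unit interval `I`. -/
theorem statement1 (S : RankOne) (hnorm : S.Normal) (hinf : volume S.X = ⊤)
    (A B : Set ℝ) (hA : S.FinUnionLevels A) (hB : S.FinUnionLevels B)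
    (hAI : A ⊆ S.lvl 0 0) (hBI : B ⊆ S.lvl 0 0) :
    Tendsto (fun n => (S.a (S.lvl 0 0) n)⁻¹ *
        ∑ k ∈ Finset.range n, (S.μ (A ∩ (⇑S.T)^[k] '' B)).toReal)
      atTop (nhds ((S.μ A).toReal * (S.μ B).toReal)) := by
  obtain ⟨N₁, h₁⟩ := S.exists_rep' hA
  obtain ⟨N₂, h₂⟩ := S.exists_rep' hB
  obtain ⟨P, hP⟩ := h₁ (max N₁ N₂) (le_max_left _ _)
  obtain ⟨Q, hQ⟩ := h₂ (max N₁ N₂) (le_max_right _ _)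
  generalize max N₁ N₂ = N at hP hQ
  obtain ⟨R, hR⟩ := S.rep_le' (Nat.zero_le N) (S.h_pos' 0)
  have hI : (S.μ (S.lvl 0 0)).toReal = 1 := by
    rw [S.mu_lvl' (S.h_pos' 0), S.w0]; simp
  have hRw : (R.card : ℝ) * S.w N = 1 := by rw [← S.rep_measure' hR, hI]
  have hRne : (R.card : ℝ) ≠ 0 := fun h => by simp [h] at hRw
  have ha : ∀ n, S.a (S.lvl 0 0) n = S.sig' (S.lvl 0 0) (S.lvl 0 0) n := by
    intro n
    simp [RankOne.a, RankOne.u, hI, RankOne.sig', RankOne.cor']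
  have hlim := (S.sig_ratio' hP hQ).div (S.sig_ratio' hR hR) (mul_ne_zero hRne hRne)
  have hval : (S.μ A).toReal * (S.μ B).toReal =
      (P.card * Q.card : ℝ) / (R.card * R.card) := by
    rw [S.rep_measure' hP, S.rep_measure' hQ, eq_div_iff (mul_ne_zero hRne hRne)]
    linear_combination (P.card : ℝ) * Q.card * (R.card * S.w N + 1) * hRw
  rw [hval]
  refine hlim.congr' ?_
  filter_upwards [(S.sig_tendsto' N).eventually_gt_atTop 0] with n hn
  rw [ha, Pi.div_apply, div_div_div_cancel_right₀ hn.ne', div_eq_inv_mul]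
  rfl
end

section
/- Let T be an exponentially growing rank-one transformation, let I be the unit interval, and set n_m = M_m + 1 where M_m is the maximal height of a descendant of I in column C_m. Then T satisfies the Renyi inequality with constant 2 along the sequence (n_m): for every m, ∫_I (S_{n_m}(1_I))² dμ ≤ 2 (∫_I S_{n_m}(1_I) dμ)², where S_n(1_I) = ∑_{k=0}^{n−1} 1_I ∘ T^k; hence T is subsequence rationally ergodic on I along (n_m). -/
open MeasureTheory Filter Set Pointwise

namespace RankOne

lemma mem_Hset' (S : RankOne) (n x : ℕ) :
    x ∈ S.Hset n ↔ ∃ k < S.r n, ∑ i ∈ Finset.range k, (S.h n + S.s n i) = x := by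
  have := S.hr n
  simp only [Hset, Finset.mem_insert, Finset.mem_image, Finset.mem_range]
  constructor
  · rintro (rfl | ⟨i, hi, rfl⟩)
    · exact ⟨0, by omega, by simp⟩
    · exact ⟨i + 1, by omega, rfl⟩
  · rintro ⟨k, hk, rfl⟩
    cases k with
    | zero => left; simp
    | succ k => right; exact ⟨k, by omega, rfl⟩

lemma desc_succ' (S : RankOne) (m x : ℕ) :
    x ∈ S.desc 0 0 (m + 1) ↔ ∃ d ∈ S.desc 0 0 m, ∃ k < S.r m,
      (∑ i ∈ Finset.range k, (S.h m + S.s m i)) + d = x := by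
  simp only [desc, Nat.not_lt_zero, if_false, Finset.mem_add, mem_Hset']
  constructor
  · rintro ⟨d, hd, _, ⟨k, hk, rfl⟩, rfl⟩
    exact ⟨d, hd, k, hk, by ring⟩
  · rintro ⟨d, hd, k, hk, rfl⟩
    exact ⟨d, hd, _, ⟨k, hk, rfl⟩, by ring⟩

lemma height_bound' (S : RankOne) (m d k : ℕ) (hd : d < S.h m) (hk : k < S.r m) :
    (∑ i ∈ Finset.range k, (S.h m + S.s m i)) + d + S.s m (S.r m - 1) < S.h (m + 1) := by
  obtain ⟨q, hq⟩ : ∃ q, S.r m = q + 1 := ⟨S.r m - 1, by omega⟩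
  rw [S.hrec, hq, Finset.sum_range_succ]
  have : ∑ i ∈ Finset.range k, (S.h m + S.s m i) ≤ ∑ i ∈ Finset.range q, (S.h m + S.s m i) :=
    Finset.sum_le_sum_of_subset (by
      intro a; simp only [Finset.mem_range]; omega)
  simp only [Nat.add_sub_cancel]
  omega

lemma desc_lt' (S : RankOne) (m : ℕ) : ∀ d ∈ S.desc 0 0 m, d < S.h m := by
  induction m with
  | zero => intro d hd; simp [desc] at hd; rw [S.h0, hd]; norm_num
  | succ m ih =>
    intro x hx
    obtain ⟨d, hd, k, hk, rfl⟩ := (S.desc_succ' m x).1 hx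
    have := S.height_bound' m d k (ih d hd) hk
    omega

lemma two_desc_lt' (S : RankOne) (hexp : S.ExpGrowing) (m : ℕ) :
    ∀ d ∈ S.desc 0 0 m, 2 * d < S.h m := by
  cases m with
  | zero => intro d hd; simp [desc] at hd; rw [S.h0, hd]; norm_num
  | succ m =>
    intro x hx
    obtain ⟨d, hd, k, hk, rfl⟩ := (S.desc_succ' m x).1 hx
    have := S.height_bound' m d k (S.desc_lt' m d hd) hk
    have := hexp m
    omega

lemma two_M_lt' (S : RankOne) (hexp : S.ExpGrowing) (m : ℕ) : 2 * S.M m < S.h m := by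
  have h : S.M m ≤ (S.h m - 1) / 2 := by
    refine Finset.sup_le fun d hd => ?_
    have := S.two_desc_lt' hexp m d hd
    simp only [id]; omega
  have hne : 0 < S.h m := by
    have h0 : 0 ∈ S.desc 0 0 m := by
      induction m with
      | zero => simp [desc]
      | succ m ih =>
        refine (S.desc_succ' m 0).2 ⟨0, ih ?_, 0, by have := S.hr m; omega, by simp⟩
        refine Finset.sup_le fun d hd => ?_
        have := S.two_desc_lt' hexp m d hd
        simp only [id]; omega
    exact lt_of_le_of_lt (Nat.zero_le _) (S.desc_lt' m 0 h0)
  omega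

lemma le_M' (S : RankOne) (m d : ℕ) (hd : d ∈ S.desc 0 0 m) : d ≤ S.M m :=
  Finset.le_sup (f := id) hd

lemma r_mul_w' (S : RankOne) (m : ℕ) : (S.r m : ℝ) * S.w (m + 1) = S.w m := by
  have := S.hr m
  have : (0 : ℝ) < S.r m := by exact_mod_cast (by omega : 0 < S.r m)
  rw [S.wrec]; field_simp

lemma lvl_sub' (S : RankOne) (m d k : ℕ) (hd : d < S.h m) (hk : k < S.r m) :
    S.lvl (m + 1) ((∑ i ∈ Finset.range k, (S.h m + S.s m i)) + d) ⊆ S.lvl m d := by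
  intro x hx
  simp only [lvl, S.stack m d hd k hk, Set.mem_Ioo] at hx ⊢
  have hw := S.w_pos' (m + 1)
  have hrw := S.r_mul_w' m
  have h1 : (k : ℝ) + 1 ≤ S.r m := by exact_mod_cast hk
  have h2 : (0 : ℝ) ≤ k := by positivity
  constructor <;> nlinarith

lemma lvl_diff' (S : RankOne) (m d : ℕ) (hd : d < S.h m) (x : ℝ) (hx : x ∈ S.lvl m d) :
    (∃ k < S.r m, x ∈ S.lvl (m + 1) ((∑ i ∈ Finset.range k, (S.h m + S.s m i)) + d)) ∨
    ∃ k < S.r m, x = S.pos m d + (k : ℝ) * S.w (m + 1) := by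
  simp only [lvl, Set.mem_Ioo] at hx
  have hw := S.w_pos' (m + 1)
  have hrw := S.r_mul_w' m
  have h0 : 0 ≤ (x - S.pos m d) / S.w (m + 1) := div_nonneg (by linarith) hw.le
  have h1 := Nat.floor_le h0
  have h2 := Nat.lt_floor_add_one ((x - S.pos m d) / S.w (m + 1))
  set k := ⌊(x - S.pos m d) / S.w (m + 1)⌋₊ with hkdef
  rw [le_div_iff₀ hw] at h1
  rw [div_lt_iff₀ hw] at h2
  have hk : k < S.r m := by
    have : (k : ℝ) < S.r m := by
      by_contra hcon
      push Not at hcon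
      nlinarith
    exact_mod_cast this
  rcases h1.eq_or_lt with h | h
  · right; exact ⟨k, hk, by linarith⟩
  · left
    refine ⟨k, hk, ?_⟩
    simp only [lvl, S.stack m d hd k hk, Set.mem_Ioo]
    constructor <;> linarith

/-- union of the descendants -/
def Eset (S : RankOne) (m : ℕ) : Set ℝ := ⋃ d ∈ S.desc 0 0 m, S.lvl m d

lemma Eset_sub' (S : RankOne) (m : ℕ) : S.Eset m ⊆ S.lvl 0 0 := by
  induction m with
  | zero => simp [Eset, desc]
  | succ m ih =>
    refine subset_trans ?_ ih
    intro x hx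
    simp only [Eset, Set.mem_iUnion] at hx ⊢
    obtain ⟨y, hy, hxy⟩ := hx
    obtain ⟨d, hd, k, hk, rfl⟩ := (S.desc_succ' m y).1 hy
    exact ⟨d, hd, S.lvl_sub' m d k (S.desc_lt' m d hd) hk hxy⟩

lemma diff_finite' (S : RankOne) (m : ℕ) : (S.lvl 0 0 \ S.Eset m).Finite := by
  induction m with
  | zero => simp [Eset, desc]
  | succ m ih =>
    refine (ih.union ((Finset.finite_toSet ((S.desc 0 0 m ×ˢ Finset.range (S.r m)).image
      fun p => S.pos m p.1 + (p.2 : ℝ) * S.w (m + 1))))).subset ?_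
    rintro x ⟨hx, hn⟩
    by_cases hE : x ∈ S.Eset m
    · right
      simp only [Eset, Set.mem_iUnion] at hE
      obtain ⟨d, hd, hxd⟩ := hE
      rcases S.lvl_diff' m d (S.desc_lt' m d hd) x hxd with ⟨k, hk, h⟩ | ⟨k, hk, h⟩
      · exfalso; apply hn
        simp only [Eset, Set.mem_iUnion]
        exact ⟨_, (S.desc_succ' m _).2 ⟨d, hd, k, hk, rfl⟩, h⟩
      · simp only [Finset.coe_image, Set.mem_image, Finset.mem_coe, Finset.mem_product,
          Finset.mem_range]
        exact ⟨(d, k), ⟨hd, hk⟩, h.symm⟩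
    · left; exact ⟨hx, hE⟩

lemma vol_lvl' (S : RankOne) (m d : ℕ) : volume (S.lvl m d) = ENNReal.ofReal (S.w m) := by
  simp [lvl]

lemma not_desc' (S : RankOne) (m j : ℕ) (hj : j < S.h m) (hD : j ∉ S.desc 0 0 m) (x : ℝ)
    (hx : x ∈ S.lvl m j) : x ∉ S.lvl 0 0 := by
  intro hxI
  have hsub : S.lvl m j ∩ S.lvl 0 0 ⊆ S.lvl 0 0 \ S.Eset m := by
    rintro y ⟨h1, h2⟩
    refine ⟨h2, fun hE => ?_⟩
    simp only [Eset, Set.mem_iUnion] at hE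
    obtain ⟨d, hd, hyd⟩ := hE
    have hne : j ≠ d := fun h => hD (h ▸ hd)
    exact Set.disjoint_left.1 (S.disj m j hj d (S.desc_lt' m d hd) hne) h1 hyd
  have hfin := (S.diff_finite' m).subset hsub
  have hopen : IsOpen (S.lvl m j ∩ S.lvl 0 0) := isOpen_Ioo.inter isOpen_Ioo
  have hpos := hopen.measure_pos volume ⟨x, hx, hxI⟩
  rw [hfin.measure_zero] at hpos
  exact lt_irrefl _ hpos

lemma iter' (S : RankOne) (m d k : ℕ) (hk : d + k < S.h m) (x : ℝ) (hx : x ∈ S.lvl m d) :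
    (⇑S.T)^[k] x ∈ S.lvl m (d + k) := by
  induction k with
  | zero => simpa using hx
  | succ k ih =>
    have h1 := ih (by omega)
    rw [Function.iterate_succ_apply', S.Tmap m (d + k) (by omega) _ h1]
    simp only [lvl, Set.mem_Ioo, ← add_assoc] at h1 ⊢
    constructor <;> linarith

lemma birk' (S : RankOne) (hexp : S.ExpGrowing) (m d : ℕ) (hd : d ∈ S.desc 0 0 m) (x : ℝ)
    (hx : x ∈ S.lvl m d) : S.birkhoff (S.lvl 0 0) (S.M m + 1) x =
      (((S.desc 0 0 m).filter (fun y => d ≤ y)).card : ℝ) := by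
  have h2 := S.two_M_lt' hexp m
  have hdM := S.le_M' m d hd
  have hterm : ∀ k ∈ Finset.range (S.M m + 1),
      Set.indicator (S.lvl 0 0) (fun _ => (1 : ℝ)) ((⇑S.T)^[k] x)
        = if d + k ∈ S.desc 0 0 m then 1 else 0 := by
    intro k hk
    rw [Finset.mem_range] at hk
    have hit := S.iter' m d k (by omega) x hx
    split_ifs with h
    · refine Set.indicator_of_mem (S.Eset_sub' m ?_) _
      simp only [Eset, Set.mem_iUnion]
      exact ⟨_, h, hit⟩
    · exact Set.indicator_of_notMem (S.not_desc' m _ (by omega) h _ hit) _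
  rw [birkhoff, Finset.sum_congr rfl hterm, Finset.sum_boole]
  congr 1
  refine Finset.card_bij (fun k _ => d + k) ?_ ?_ ?_
  · intro k hk; simp only [Finset.mem_filter] at hk ⊢; exact ⟨hk.2, by omega⟩
  · intro a _ b _ h; simpa using h
  · intro y hy
    simp only [Finset.mem_filter, Finset.mem_range] at hy ⊢
    have := S.le_M' m y hy.1
    refine ⟨y - d, ⟨by omega, ?_⟩, by omega⟩
    rw [Nat.add_sub_cancel' hy.2]; exact hy.1

lemma comb' (g : ℕ → ℝ) (D : Finset ℕ) :
    ∑ d ∈ D, g ((D.filter (fun y => d ≤ y)).card) = ∑ i ∈ Finset.range D.card, g (i + 1) := by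
  induction D using Finset.induction_on_min with
  | empty => simp
  | insert a D ha ih =>
    have hn : a ∉ D := fun h => lt_irrefl _ (ha a h)
    rw [Finset.sum_insert hn, Finset.card_insert_of_notMem hn, Finset.sum_range_succ, ← ih,
      add_comm]
    congr 1
    · refine Finset.sum_congr rfl fun d hd => ?_
      rw [Finset.filter_insert, if_neg (not_le.2 (ha d hd))]
    · rw [Finset.filter_true_of_mem, Finset.card_insert_of_notMem hn]
      intro y hy
      rcases Finset.mem_insert.1 hy with rfl | h
      · exact le_rfl
      · exact (ha y h).le

lemma integral' (S : RankOne) (m : ℕ) (f : ℝ → ℝ) (c : ℕ → ℝ)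
    (hf : ∀ d ∈ S.desc 0 0 m, ∀ x ∈ S.lvl m d, f x = c d) :
    ∫ x in S.lvl 0 0, f x ∂S.μ = S.w m * ∑ d ∈ S.desc 0 0 m, c d := by
  have hIX : S.lvl 0 0 ⊆ S.X := by
    rw [S.hX]
    intro x hx
    simp only [Set.mem_iUnion]
    exact ⟨0, 0, by rw [S.h0]; norm_num, hx⟩
  have hmeas : ∀ j d, MeasurableSet (S.lvl j d) := fun j d => measurableSet_Ioo
  rw [μ, Measure.restrict_restrict (hmeas 0 0), Set.inter_eq_left.2 hIX]
  have hae : (S.lvl 0 0 : Set ℝ) =ᵐ[volume] S.Eset m := by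
    rw [ae_eq_set]
    refine ⟨(S.diff_finite' m).measure_zero _, ?_⟩
    rw [Set.sdiff_eq_empty.2 (S.Eset_sub' m)]; simp
  rw [setIntegral_congr_set hae, Eset, integral_biUnion_finset, Finset.mul_sum]
  · refine Finset.sum_congr rfl fun d hd => ?_
    rw [setIntegral_congr_fun (hmeas m d) (fun x hx => hf d hd x hx), setIntegral_const,
      measureReal_def, vol_lvl', ENNReal.toReal_ofReal (S.w_pos' m).le, smul_eq_mul]
  · exact fun d _ => hmeas m d
  · intro d hd d' hd' hne
    exact S.disj m d (S.desc_lt' m d hd) d' (S.desc_lt' m d' hd') hne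
  · intro d hd
    refine IntegrableOn.congr_fun (f := fun _ => c d) ?_ (fun x hx => (hf d hd x hx).symm)
      (hmeas m d)
    refine integrableOn_const ?_
    rw [vol_lvl']; exact ENNReal.ofReal_ne_top

lemma card_w' (S : RankOne) (m : ℕ) : S.w m * ((S.desc 0 0 m).card : ℝ) = 1 := by
  have h1 := S.integral' m (fun _ => 1) (fun _ => 1) (fun _ _ _ _ => rfl)
  have h2 := S.integral' 0 (fun _ => 1) (fun _ => 1) (fun _ _ _ _ => rfl)
  rw [h1] at h2
  simpa [desc, S.w0] using h2

end RankOne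

/-- An exponentially growing rank-one transformation satisfies the Renyi
inequality with constant `2` along the sequence `n_m = M_m + 1`:
`∫_I (S_{n_m}(1_I))² dμ ≤ 2 (∫_I S_{n_m}(1_I) dμ)²` for every `m`; hence `T` is subsequence
rationally ergodic on `I` along `(n_m)`. -/
theorem statement4 (S : RankOne) (hexp : S.ExpGrowing) (m : ℕ) :
    ∫ x in S.lvl 0 0, (S.birkhoff (S.lvl 0 0) (S.M m + 1) x) ^ 2 ∂S.μ
      ≤ 2 * (∫ x in S.lvl 0 0, S.birkhoff (S.lvl 0 0) (S.M m + 1) x ∂S.μ) ^ 2 := by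
  rw [S.integral' m _ (fun d => (((S.desc 0 0 m).filter (fun y => d ≤ y)).card : ℝ) ^ 2)
      (fun d hd x hx => by rw [S.birk' hexp m d hd x hx]),
    S.integral' m _ (fun d => (((S.desc 0 0 m).filter (fun y => d ≤ y)).card : ℝ))
      (fun d hd x hx => S.birk' hexp m d hd x hx),
    RankOne.comb' (fun n => (n : ℝ) ^ 2), RankOne.comb' (fun n => (n : ℝ))]
  have hc := S.card_w' m
  have s1 : ∀ L : ℕ, ∑ i ∈ Finset.range L, ((i + 1 : ℕ) : ℝ) = L * (L + 1) / 2 := by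
    intro L
    induction L with
    | zero => simp
    | succ L ih => rw [Finset.sum_range_succ, ih]; push_cast; ring
  have s2 : ∀ L : ℕ, ∑ i ∈ Finset.range L, ((i + 1 : ℕ) : ℝ) ^ 2
      = L * (L + 1) * (2 * L + 1) / 6 := by
    intro L
    induction L with
    | zero => simp
    | succ L ih => rw [Finset.sum_range_succ, ih]; push_cast; ring
  rw [s1, s2]
  generalize (S.desc 0 0 m).card = L at hc
  have e1 : S.w m * ((L : ℝ) * (L + 1) / 2) = (L + 1) / 2 := by
    linear_combination ((L : ℝ) + 1) / 2 * hc
  have e2 : S.w m * ((L : ℝ) * (L + 1) * (2 * L + 1) / 6) = (L + 1) * (2 * L + 1) / 6 := by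
    linear_combination ((L : ℝ) + 1) * (2 * L + 1) / 6 * hc
  rw [e1, e2]
  have : (0 : ℝ) ≤ L := by positivity
  nlinarith
end
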